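/- Let (a_k) be a sequence of real numbers such that the power series Σ a_k z^k has infinite radius of convergence, let c ∈ ℝ, and let u(t) = Σ_{k=0}^∞ a_k (t-c)^k for all t ∈ ℝ. Let σ, τ ∈ ℝ, p ∈ ℕ, and set d = σ - c - τ. Then for every k ∈ ℕ the series Σ_{y=k+p}^∞ binom(y, k+p) d^{y-k-p} a_y converges absolutely, and for all t ∈ ℝ: u^{(p)}(t-τ) = Σ_{k=0}^∞ ((k+p)!/k!) (Σ_{y=k+p}^∞ binom(y, k+p) d^{y-k-p} a_y) (t-σ)^k. That is, the Taylor coefficients of t ↦ u^{(p)}(t-τ) at σ are ((k+p)!/k!) Σ_{y=k+p}^∞ binom(y,k+p)(σ-c-τ)^{y-k-p} a_y. -/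

import Mathlib

/-!
Moving the origin of a power series by `d` replaces its `k`-th coefficient by
`∑ₘ binom(m + k, k) d ^ m a_{m + k}`, because each of the `binom(m + k, k)` ways of inserting `d`
into `m` of the `m + k` slots of the term of degree `m + k` contributes equally. For `d = σ - c - τ`
the new center is `σ - τ`. Differentiating `p` times then shifts the index by `p` and multiplies the
`k`-th coefficient by `(k + p)! / k!`; evaluating at `t - τ`, where `(t - τ) - (σ - τ) = t - σ`,
gives the claim.
-/

open FormalMultilinearSeries
open scoped ENNReal

section PowerSeries

variable {𝕜 F : Type*} [NontriviallyNormedField 𝕜] [NormedAddCommGroup F] [NormedSpace 𝕜 F]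

section ChangeOrigin

variable (q : FormalMultilinearSeries 𝕜 𝕜 F)

theorem changeOriginSeries_apply_one (k m : ℕ) (x : 𝕜) :
    q.changeOriginSeries k m (fun _ => x) 1 =
      (((m + k).choose k : 𝕜) * x ^ m) • q.coeff (m + k) := by
  have term_eq (s : {s : Finset (Fin (k + m)) // s.card = m}) :
      q.changeOriginSeriesTerm k m s s.2 (fun _ => x) 1 = x ^ m • q.coeff (k + m) := by
    rw [Pi.one_def, changeOriginSeriesTerm_apply, apply_eq_prod_smul_coeff,
      Finset.prod_piecewise]
    simp [s.2]
  have card_eq : Fintype.card {s : Finset (Fin (k + m)) // s.card = m} = (m + k).choose k := by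
    rw [Fintype.card_finset_len, Fintype.card_fin, add_comm k m, Nat.choose_symm_add]
  simp only [changeOriginSeries, sum_apply, term_eq, Finset.sum_const, Finset.card_univ, card_eq,
    add_comm k m, ← Nat.cast_smul_eq_nsmul 𝕜, smul_smul]

variable {q} {x : 𝕜}

theorem mem_eball_radius_changeOriginSeries (hx : ‖x‖ₑ < q.radius) (k : ℕ) :
    x ∈ Metric.eball 0 (q.changeOriginSeries k).radius :=
  mem_eball_zero_iff.2 (hx.trans_le (q.le_changeOriginSeries_radius k))

theorem summable_norm_changeOrigin_coeff (hx : ‖x‖ₑ < q.radius) (k : ℕ) :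
    Summable fun m => ‖(((m + k).choose k : 𝕜) * x ^ m) • q.coeff (m + k)‖ := by
  refine ((q.changeOriginSeries k).summable_norm_apply
    (mem_eball_radius_changeOriginSeries hx k)).of_nonneg_of_le (fun _ => norm_nonneg _) fun m => ?_
  rw [← changeOriginSeries_apply_one]
  exact ContinuousMultilinearMap.unit_le_opNorm _ (pi_norm_const_le 1 |>.trans_eq norm_one)

theorem changeOrigin_coeff [CompleteSpace F] (hx : ‖x‖ₑ < q.radius) (k : ℕ) :
    (q.changeOrigin x).coeff k =
      ∑' m, (((m + k).choose k : 𝕜) * x ^ m) • q.coeff (m + k) := by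
  have hsum := ((q.changeOriginSeries k).hasSum (mem_eball_radius_changeOriginSeries hx k)).mapL
    (ContinuousMultilinearMap.apply 𝕜 (fun _ : Fin k => 𝕜) F 1)
  simp only [ContinuousMultilinearMap.apply_apply, changeOriginSeries_apply_one] at hsum
  exact hsum.tsum_eq.symm

end ChangeOrigin

section IteratedDeriv

/-- The termwise derivative of a one-variable power series. Unlike `q.derivSeries`, whose
coefficients are the linear maps representing the Fréchet derivative, it has coefficients in `F`, so
that it can be iterated without changing the type. -/
noncomputable def termwiseDeriv (q : FormalMultilinearSeries 𝕜 𝕜 F) :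
    FormalMultilinearSeries 𝕜 𝕜 F :=
  (ContinuousLinearMap.apply 𝕜 F (1 : 𝕜)).compFormalMultilinearSeries q.derivSeries

theorem coeff_termwiseDeriv (q : FormalMultilinearSeries 𝕜 𝕜 F) (k : ℕ) :
    (termwiseDeriv q).coeff k = (k + 1) • q.coeff (k + 1) :=
  q.derivSeries_coeff_one k

theorem coeff_iterate_termwiseDeriv (q : FormalMultilinearSeries 𝕜 𝕜 F) (p k : ℕ) :
    (termwiseDeriv^[p] q).coeff k = (k + p).descFactorial p • q.coeff (k + p) := by
  induction p generalizing k with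
  | zero => simp
  | succ p ih =>
    have descFactorial_eq :
        (k + (p + 1)).descFactorial (p + 1) = (k + 1) * (k + 1 + p).descFactorial p := by
      rw [Nat.descFactorial_succ, ← add_assoc, add_right_comm, Nat.add_sub_cancel]
    rw [Function.iterate_succ_apply', coeff_termwiseDeriv, ih, smul_smul, descFactorial_eq,
      add_assoc, add_comm 1 p]

variable [CompleteSpace F] {q : FormalMultilinearSeries 𝕜 𝕜 F} {f : 𝕜 → F} {x : 𝕜} {r : ℝ≥0∞}

theorem hasFPowerSeriesOnBall_deriv (hf : HasFPowerSeriesOnBall f q x r) :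
    HasFPowerSeriesOnBall (deriv f) (termwiseDeriv q) x r :=
  (ContinuousLinearMap.apply 𝕜 F (1 : 𝕜)).comp_hasFPowerSeriesOnBall hf.fderiv

theorem hasFPowerSeriesOnBall_iteratedDeriv (hf : HasFPowerSeriesOnBall f q x r) (p : ℕ) :
    HasFPowerSeriesOnBall (iteratedDeriv p f) (termwiseDeriv^[p] q) x r := by
  induction p with
  | zero => simpa using hf
  | succ p ih =>
    rw [iteratedDeriv_succ, Function.iterate_succ_apply']
    exact hasFPowerSeriesOnBall_deriv ih

end IteratedDeriv

theorem hasFPowerSeriesOnBall_top_of_forall_hasSum {q : FormalMultilinearSeries 𝕜 𝕜 F} {f : 𝕜 → F}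
    {x : 𝕜} (hf : ∀ y, HasSum (fun n => (y - x) ^ n • q.coeff n) (f y)) :
    HasFPowerSeriesOnBall f q x ∞ where
  r_le := by
    refine ENNReal.le_of_forall_nnreal_lt fun r _ => ?_
    obtain ⟨z, hz⟩ := NormedField.exists_lt_norm 𝕜 r
    have terms_tendsto := (hf (x + z)).summable.tendsto_cofinite_zero.norm
    rw [Nat.cofinite_eq_atTop] at terms_tendsto
    have hz_radius : (‖z‖₊ : ℝ≥0∞) ≤ q.radius := by
      refine q.le_radius_of_tendsto (terms_tendsto.congr fun n => ?_)
      rw [add_sub_cancel_left, norm_smul, norm_pow, norm_apply_eq_norm_coef, mul_comm, coe_nnnorm]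
    exact (ENNReal.coe_le_coe.2 hz.le).trans hz_radius
  r_pos := ENNReal.zero_lt_top
  hasSum {y} _ := by simpa using hf (x + y)

theorem stmt_1_general [CompleteSpace F] {q : FormalMultilinearSeries 𝕜 𝕜 F} {c : 𝕜} {u : 𝕜 → F}
    {r : ℝ≥0∞} (hu : HasFPowerSeriesOnBall u q c r) (σ τ : 𝕜) (p : ℕ) {d : 𝕜}
    (hd : d = σ - c - τ) (hdr : ‖d‖ₑ < r) :
    (∀ k, Summable fun m =>
      ‖(((m + (k + p)).choose (k + p) : 𝕜) * d ^ m) • q.coeff (m + (k + p))‖) ∧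
    ∀ t ∈ Metric.eball σ (r - ‖d‖ₑ),
      HasSum (fun k => (t - σ) ^ k • ((k + p).descFactorial p : 𝕜) •
          ∑' m, (((m + (k + p)).choose (k + p) : 𝕜) * d ^ m) • q.coeff (m + (k + p)))
        (iteratedDeriv p u (t - τ)) := by
  have hd_radius : ‖d‖ₑ < q.radius := hdr.trans_le hu.r_le
  refine ⟨fun k => summable_norm_changeOrigin_coeff hd_radius (k + p), fun t ht => ?_⟩
  have expansion := hasFPowerSeriesOnBall_iteratedDeriv (hu.changeOrigin hdr) p
  have ht' : t - σ ∈ Metric.eball 0 (r - ‖d‖ₑ) := by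
    rwa [mem_eball_zero_iff, ← edist_eq_enorm_sub]
  have center_add : c + d + (t - σ) = t - τ := by rw [hd]; ring
  simpa only [center_add, apply_eq_pow_smul_coeff, coeff_iterate_termwiseDeriv,
    changeOrigin_coeff hd_radius, ← Nat.cast_smul_eq_nsmul 𝕜] using expansion.hasSum ht'

end PowerSeries

theorem cast_add_descFactorial_eq_div {K : Type*} [Field K] [CharZero K] (k p : ℕ) :
    ((k + p).descFactorial p : K) = (k + p).factorial / k.factorial := by
  rw [eq_div_iff (Nat.cast_ne_zero.2 k.factorial_ne_zero), mul_comm, ← Nat.cast_mul]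
  simpa using congrArg (Nat.cast (R := K)) (Nat.factorial_mul_descFactorial (Nat.le_add_left p k))

/-- Lemma 3 of the paper: if `u` is given by an everywhere-convergent power series
with coefficients `a` centered at `c`, and `d = σ - c - τ`, then for every `k` the
series `Σ_{y=k+p}^∞ binom(y, k+p) d^{y-k-p} a_y` converges absolutely, and for all
`t`, `u^{(p)}(t-τ) = Σ_{k=0}^∞ ((k+p)!/k!) (Σ_{y=k+p}^∞ binom(y,k+p) d^{y-k-p} a_y) (t-σ)^k`;
i.e. the Taylor coefficients of `t ↦ u^{(p)}(t-τ)` at `σ` are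
`((k+p)!/k!) Σ_{y=k+p}^∞ binom(y,k+p)(σ-c-τ)^{y-k-p} a_y`. -/
theorem stmt_1 (a : ℕ → ℝ) (c : ℝ) (u : ℝ → ℝ)
    (hu : ∀ t : ℝ, HasSum (fun k : ℕ => a k * (t - c) ^ k) (u t))
    (σ τ : ℝ) (p : ℕ) (d : ℝ) (hd : d = σ - c - τ) :
    (∀ k : ℕ, Summable (fun m : ℕ =>
        |((m + (k + p)).choose (k + p) : ℝ) * d ^ m * a (m + (k + p))|)) ∧
    ∀ t : ℝ,
      HasSum
        (fun k : ℕ => (((k + p).factorial : ℝ) / (k.factorial : ℝ))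
          * (∑' m : ℕ, ((m + (k + p)).choose (k + p) : ℝ) * d ^ m * a (m + (k + p)))
          * (t - σ) ^ k)
        (iteratedDeriv p u (t - τ)) := by
  have expansion : HasFPowerSeriesOnBall u (ofScalars ℝ a) c ∞ :=
    hasFPowerSeriesOnBall_top_of_forall_hasSum fun t => by simpa [mul_comm] using hu t
  simpa [cast_add_descFactorial_eq_div, mul_comm, mul_left_comm] using
    stmt_1_general expansion σ τ p hd enorm_lt_top
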